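/- Walks through an enforced arc survive enforcement (converse direction of Proposition 2.5): every s,t-walk in G that contains the arc (u, v) uses no arc deleted by enforcing (u, v), i.e., it contains no arc (u, w) with w ≠ v and no arc (i, j) with τ(i) < τ(u) < τ(j); hence it is an s,t-walk in the subgraph obtained by enforcing (u, v). -/

import Mathlib

variable {V : Type*} [Fintype V]

/-- An `s,t`-walk in the directed graph with arc set `A` is a finite list of vertices
starting at `s` and ending at `t` whose consecutive pairs are all arcs. -/
def IsWalk (A : Set (V × V)) (s t : V) (p : List V) : Prop :=
  p.head? = some s ∧ p.getLast? = some t ∧ ∀ a ∈ p.zip p.tail, a ∈ A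

/-- The arcs deleted when enforcing the arc `uv = (u, v)`: every arc `(u, w)` with
`w ≠ v`, and every arc `(i, j)` with `τ i < τ u < τ j`. -/
def EnfDeleted (τ : V → ℕ) (uv a : V × V) : Prop :=
  (a.1 = uv.1 ∧ a.2 ≠ uv.2) ∨ (τ a.1 < τ uv.1 ∧ τ uv.1 < τ a.2)

/-- Enforcing an arc `uv ∈ A`: the subgraph of `G` obtained by deleting every arc
`(u, w)` with `w ≠ v` and every arc `(i, j)` with `τ i < τ u < τ j`. -/
def enforce (A : Set (V × V)) (τ : V → ℕ) (uv : V × V) : Set (V × V) :=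
  {a ∈ A | ¬ EnfDeleted τ uv a}

/-- Along a list whose consecutive pairs strictly increase `τ`, the first vertex has the
smallest `τ`-value among the first components of these pairs. -/
theorem le_fst_of_mem_zip_tail {α : Type*} {τ : α → ℕ} {x : α} {l : List α} {a : α × α}
    (hl : ∀ b ∈ (x :: l).zip l, τ b.1 < τ b.2) (ha : a ∈ (x :: l).zip l) :
    τ x ≤ τ a.1 := by
  induction l generalizing x with
  | nil => simp at ha
  | cons y l ih =>
    simp only [List.zip_cons_cons, List.mem_cons, forall_eq_or_imp] at hl ha
    rcases ha with rfl | ha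
    · exact le_rfl
    · exact hl.1.le.trans (ih hl.2 ha)

/-- Two consecutive pairs of a list along which `τ` strictly increases either coincide, or
one of them ends no later than the other starts. -/
theorem eq_or_le_or_le_of_mem_zip_tail {α : Type*} {τ : α → ℕ} {p : List α} {a b : α × α}
    (hp : ∀ c ∈ p.zip p.tail, τ c.1 < τ c.2)
    (ha : a ∈ p.zip p.tail) (hb : b ∈ p.zip p.tail) :
    a = b ∨ τ a.2 ≤ τ b.1 ∨ τ b.2 ≤ τ a.1 := by
  induction p with
  | nil => simp at ha
  | cons x l ih =>
    cases l with
    | nil => simp at ha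
    | cons y l =>
      simp only [List.tail_cons, List.zip_cons_cons, List.mem_cons,
        forall_eq_or_imp] at hp ha hb ih
      rcases ha with rfl | ha <;> rcases hb with rfl | hb
      · exact Or.inl rfl
      · exact Or.inr (Or.inl (le_fst_of_mem_zip_tail hp.2 hb))
      · exact Or.inr (Or.inr (le_fst_of_mem_zip_tail hp.2 ha))
      · exact ih hp.2 ha hb

/-- Walks through an enforced arc survive enforcement: every `s,t`-walk in `G` containing
the arc `(u, v)` uses no arc deleted by enforcing `(u, v)`, i.e. it contains no arc
`(u, w)` with `w ≠ v` and no arc `(i, j)` with `τ i < τ u < τ j`; hence it is an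
`s,t`-walk in the subgraph obtained by enforcing `(u, v)`. -/
theorem walk_through_enforced_arc_survives (A : Set (V × V)) (τ : V → ℕ)
    (hinj : Function.Injective τ) (htopo : ∀ a ∈ A, τ a.1 < τ a.2)
    (u v : V) (huv : (u, v) ∈ A) (s t : V)
    (p : List V) (hp : IsWalk A s t p) (hcon : (u, v) ∈ p.zip p.tail) :
    (∀ w : V, w ≠ v → (u, w) ∉ p.zip p.tail) ∧
    (∀ i j : V, τ i < τ u → τ u < τ j → (i, j) ∉ p.zip p.tail) ∧
    IsWalk (enforce A τ (u, v)) s t p := by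
  obtain ⟨hs, ht, harc⟩ := hp
  have hτ : ∀ a ∈ p.zip p.tail, τ a.1 < τ a.2 := fun a ha => htopo a (harc a ha)
  have hτuv : τ u < τ v := htopo _ huv
  have hout : ∀ w : V, w ≠ v → (u, w) ∉ p.zip p.tail := by
    intro w hw hmem
    have hτuw : τ u < τ w := hτ _ hmem
    rcases eq_or_le_or_le_of_mem_zip_tail hτ hcon hmem with h | h | h
    · exact hw (congrArg Prod.snd h).symm
    · exact absurd h hτuv.not_ge
    · exact absurd h hτuw.not_ge
  have hskip : ∀ i j : V, τ i < τ u → τ u < τ j → (i, j) ∉ p.zip p.tail := by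
    intro i j hi hj hmem
    rcases eq_or_le_or_le_of_mem_zip_tail hτ hcon hmem with h | h | h
    · exact hi.ne' (congrArg (fun a => τ a.1) h)
    · exact absurd h (hi.trans hτuv).not_ge
    · exact absurd h hj.not_ge
  refine ⟨hout, hskip, hs, ht, fun a ha => ⟨harc a ha, ?_⟩⟩
  obtain ⟨i, j⟩ := a
  rintro (⟨rfl, hj⟩ | ⟨hi, hj⟩)
  · exact hout j hj ha
  · exact hskip i j hi hj ha
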